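/- Define θ_0 = 1, θ_n = Σ_{i=1}^n θ_{i−1} √(a_{i,n}) for n = 1, …, m−1, and θ̄_m = Σ_{i=1}^m θ_{i−1} √(ā_{i,m}) where ā_{i,m} = sup_{p ∈ ℕ} ( β_{i,m,p}² + β̃_{i,m,p}² ). Let Ū_m : H × H → H be the bounded linear map Ū_m(x, b) = W_m x + λ_m b. Then the network N = R_m ∘ Ū_m ∘ Q_{m−1} ∘ U_{m−1} ∘ ⋯ ∘ Q_1 ∘ U_1 : H × H → H is Lipschitz with constant θ̄_m / 2^{m−1}. -/

import Mathlib

/-!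
A firmly nonexpansive map `R` is `(Id + N) / 2` with `N` nonexpansive, and this passes to
`Q (x, b) = (R x, b)`. Hence, for every bounded linear `A`,
`‖A (Q u) - A (Q u')‖ ≤ (‖A (u - u')‖ + ‖A‖ ‖u - u'‖) / 2` (`norm_Qop_sub_le`).
Unfolding the layers one by one with this inequality shows that `A ∘ net n` is Lipschitz with
constant `2⁻ⁿ ∑ i ∈ [1, n + 1], θ (i - 1) ‖A ∘ Uₙ ∘ ⋯ ∘ Uᵢ‖` (`net_lipschitz`); the case
`A = Uₙ₊₁` of this bound is what makes the recursion defining `θ` reappear, and `A = Ū_m` gives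
the theorem because `R m` is nonexpansive.

It remains to bound operator norms. In the Hilbert basis `v`, the operator `Uₙ ∘ ⋯ ∘ Uᵢ` acts on
the `p`-th coordinates `(x_p, b_p)` by the matrix with rows `(β_{i,n,p}, β̃_{i,n,p})` and
`(0, η_{i,n})` (`coord_opComp`, `sndL_opComp`). By Parseval its norm is at most the supremum over
`p` of the norms of these `2 × 2` matrices; `a_{i,n}` is the supremum of the larger eigenvalue of
the Gram matrices, and for the first row alone Cauchy–Schwarz gives `ā_{i,n}`. The suprema are
finite because the matrix entries are bounded by the norm of the operator.
-/


noncomputable section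

open Finset

variable {H : Type*} [NormedAddCommGroup H] [InnerProductSpace ℝ H]

/-- Build the pair `(x, b)` in the `ℓ²` product space `H × H`. -/
def mkP (x b : H) : WithLp 2 (H × H) := (WithLp.equiv 2 (H × H)).symm (x, b)

/-- First component of an element of the product space. -/
def fstP (z : WithLp 2 (H × H)) : H := (WithLp.equiv 2 (H × H) z).1

/-- Second component of an element of the product space. -/
def sndP (z : WithLp 2 (H × H)) : H := (WithLp.equiv 2 (H × H) z).2

/-- `(x, b) ↦ x` as a continuous linear map on the `ℓ²` product. -/
def fstL : WithLp 2 (H × H) →L[ℝ] H :=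
  (ContinuousLinearMap.fst ℝ H H).comp
    (WithLp.prodContinuousLinearEquiv 2 ℝ H H).toContinuousLinearMap

/-- `(x, b) ↦ b` as a continuous linear map on the `ℓ²` product. -/
def sndL : WithLp 2 (H × H) →L[ℝ] H :=
  (ContinuousLinearMap.snd ℝ H H).comp
    (WithLp.prodContinuousLinearEquiv 2 ℝ H H).toContinuousLinearMap

/-- `Uₙ(x, b) = (Wₙ x + λₙ b, ηₙ b)` as a continuous linear map on the product space. -/
def Uop (W : ℕ → H →L[ℝ] H) (lam eta : ℕ → ℝ) (n : ℕ) :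
    WithLp 2 (H × H) →L[ℝ] WithLp 2 (H × H) :=
  ((WithLp.prodContinuousLinearEquiv 2 ℝ H H).symm.toContinuousLinearMap).comp
    (((((W n).comp (ContinuousLinearMap.fst ℝ H H)) + lam n • (ContinuousLinearMap.snd ℝ H H)).prod
        (eta n • (ContinuousLinearMap.snd ℝ H H))).comp
      (WithLp.prodContinuousLinearEquiv 2 ℝ H H).toContinuousLinearMap)

/-- Composition `Aₙ ∘ ⋯ ∘ Aᵢ` (the identity when `n < i`, i.e. when the composition is empty). -/
def opComp {E : Type*} [NormedAddCommGroup E] [NormedSpace ℝ E]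
    (A : ℕ → E →L[ℝ] E) (i : ℕ) : ℕ → (E →L[ℝ] E)
  | 0 => 1
  | n + 1 => if n + 1 < i then 1 else (A (n + 1)).comp (opComp A i n)

/-- `η_{i,j} = η_j ⋯ η_i` if `j ≥ i`, and `1` otherwise. -/
def etaP (eta : ℕ → ℝ) (i j : ℕ) : ℝ := ∏ k ∈ Finset.Icc i j, eta k

/-- `β_{i,n,p} = ∏_{j=i}^n β_p^{(j)}`. -/
def betaC (beta : ℕ → ℕ → ℝ) (i n p : ℕ) : ℝ := ∏ j ∈ Finset.Icc i n, beta j p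

/-- `β̃_{i,n,p} = Σ_{j=i}^{n−1} (∏_{l=j+1}^n β_p^{(l)}) λ_j η_{i,j−1} + λ_n η_{i,n−1}`. -/
def betaT (beta : ℕ → ℕ → ℝ) (lam eta : ℕ → ℝ) (i n p : ℕ) : ℝ :=
  (∑ j ∈ Finset.Icc i (n - 1), (∏ l ∈ Finset.Icc (j + 1) n, beta l p) * lam j * etaP eta i (j - 1))
    + lam n * etaP eta i (n - 1)

/-- The operator `W̃_{i,n} = Σ_{j=i}^{n−1} λ_j η_{i,j−1} (Wₙ ∘ ⋯ ∘ W_{j+1}) + λ_n η_{i,n−1} Id`. -/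
def Wt (W : ℕ → H →L[ℝ] H) (lam eta : ℕ → ℝ) (i n : ℕ) : H →L[ℝ] H :=
  (∑ j ∈ Finset.Icc i (n - 1), (lam j * etaP eta i (j - 1)) • opComp W (j + 1) n)
    + (lam n * etaP eta i (n - 1)) • (1 : H →L[ℝ] H)

/-- `a_{i,n}`. -/
def aC (beta : ℕ → ℕ → ℝ) (lam eta : ℕ → ℝ) (i n : ℕ) : ℝ :=
  (1 / 2) * ⨆ p : ℕ,
    (betaC beta i n p ^ 2 + betaT beta lam eta i n p ^ 2 + etaP eta i n ^ 2
      + Real.sqrt ((betaC beta i n p ^ 2 + betaT beta lam eta i n p ^ 2 + etaP eta i n ^ 2) ^ 2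
          - 4 * betaC beta i n p ^ 2 * etaP eta i n ^ 2))

/-- `ā_{i,n} = sup_p (β_{i,n,p}² + β̃_{i,n,p}²)`. -/
def aBar (beta : ℕ → ℕ → ℝ) (lam eta : ℕ → ℝ) (i n : ℕ) : ℝ :=
  ⨆ p : ℕ, (betaC beta i n p ^ 2 + betaT beta lam eta i n p ^ 2)

/-- `Qₙ(x, b) = (Rₙ x, b)`. -/
def Qop (R : ℕ → H → H) (n : ℕ) (z : WithLp 2 (H × H)) : WithLp 2 (H × H) :=
  mkP (R n (fstP z)) (sndP z)

/-- The virtual network `Qₙ ∘ Uₙ ∘ ⋯ ∘ Q₁ ∘ U₁`. -/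
def net (U : ℕ → WithLp 2 (H × H) →L[ℝ] WithLp 2 (H × H))
    (Q : ℕ → WithLp 2 (H × H) → WithLp 2 (H × H)) :
    ℕ → (WithLp 2 (H × H) → WithLp 2 (H × H))
  | 0 => id
  | n + 1 => fun z => Q (n + 1) (U (n + 1) (net U Q n z))

/-- `Ū_m (x, b) = W_m x + λ_m b` as a continuous linear map to `H`. -/
def Ubar (W : ℕ → H →L[ℝ] H) (lam : ℕ → ℝ) (m : ℕ) : WithLp 2 (H × H) →L[ℝ] H :=
  ((W m).comp fstL) + lam m • sndL

/-- `Û₁ b = (λ₁ b, η₁ b)`. -/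
def Uhat1a (lam eta : ℕ → ℝ) : H →L[ℝ] WithLp 2 (H × H) :=
  ((WithLp.prodContinuousLinearEquiv 2 ℝ H H).symm.toContinuousLinearMap).comp
    ((lam 1 • (1 : H →L[ℝ] H)).prod (eta 1 • (1 : H →L[ℝ] H)))

/-- `Û₁ b = (W₁ b + λ₁ b, η₁ b)`. -/
def Uhat1b (W : ℕ → H →L[ℝ] H) (lam eta : ℕ → ℝ) : H →L[ℝ] WithLp 2 (H × H) :=
  ((WithLp.prodContinuousLinearEquiv 2 ℝ H H).symm.toContinuousLinearMap).comp
    ((W 1 + lam 1 • (1 : H →L[ℝ] H)).prod (eta 1 • (1 : H →L[ℝ] H)))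

/-- The chain `Qₙ ∘ Uₙ ∘ ⋯ ∘ Q₂ ∘ U₂ ∘ Q₁ ∘ Û₁` (for `n ≥ 1`), fed with an input in `H`. -/
def midNet (U : ℕ → WithLp 2 (H × H) →L[ℝ] WithLp 2 (H × H))
    (Q : ℕ → WithLp 2 (H × H) → WithLp 2 (H × H)) (U1 : H → WithLp 2 (H × H)) :
    ℕ → (H → WithLp 2 (H × H))
  | 0 => U1
  | 1 => fun b => Q 1 (U1 b)
  | n + 2 => fun b => Q (n + 2) (U (n + 2) (midNet U Q U1 (n + 1) b))

/-! ### Unfolding the layers -/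

@[simp] lemma fstL_Uop (W : ℕ → H →L[ℝ] H) (lam eta : ℕ → ℝ) (n : ℕ) (z : WithLp 2 (H × H)) :
    fstL (Uop W lam eta n z) = W n (fstL z) + lam n • sndL z := rfl

@[simp] lemma sndL_Uop (W : ℕ → H →L[ℝ] H) (lam eta : ℕ → ℝ) (n : ℕ) (z : WithLp 2 (H × H)) :
    sndL (Uop W lam eta n z) = eta n • sndL z := rfl

@[simp] lemma fstL_Qop (R : ℕ → H → H) (n : ℕ) (z : WithLp 2 (H × H)) :
    fstL (Qop R n z) = R n (fstL z) := rfl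

@[simp] lemma sndL_Qop (R : ℕ → H → H) (n : ℕ) (z : WithLp 2 (H × H)) :
    sndL (Qop R n z) = sndL z := rfl

@[simp] lemma fstL_mkP (x b : H) : fstL (mkP x b) = x := rfl

@[simp] lemma sndL_mkP (x b : H) : sndL (mkP x b) = b := rfl

lemma norm_sq_eq_fstL_sndL (z : WithLp 2 (H × H)) : ‖z‖ ^ 2 = ‖fstL z‖ ^ 2 + ‖sndL z‖ ^ 2 :=
  WithLp.prod_norm_sq_eq_of_L2 z

lemma Ubar_eq_fstL_Uop (W : ℕ → H →L[ℝ] H) (lam eta : ℕ → ℝ) (n : ℕ) (z : WithLp 2 (H × H)) :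
    Ubar W lam n z = fstL (Uop W lam eta n z) := rfl

lemma opComp_of_lt {E : Type*} [NormedAddCommGroup E] [NormedSpace ℝ E]
    (A : ℕ → E →L[ℝ] E) {i n : ℕ} (h : n < i) : opComp A i n = 1 := by
  cases n with
  | zero => rfl
  | succ n => simp [opComp, h]

lemma opComp_succ {E : Type*} [NormedAddCommGroup E] [NormedSpace ℝ E]
    (A : ℕ → E →L[ℝ] E) {i n : ℕ} (h : i ≤ n + 1) :
    opComp A i (n + 1) = (A (n + 1)).comp (opComp A i n) := by
  simp [opComp, h]

/-- The reflection `2 Q - Id` of the layer activation is nonexpansive. -/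
lemma norm_reflect_Qop_le (R : ℕ → H → H) (n : ℕ)
    (hR : ∀ x y : H,
      ‖R n x - R n y‖ ^ 2 + ‖(x - R n x) - (y - R n y)‖ ^ 2 ≤ ‖x - y‖ ^ 2)
    (u u' : WithLp 2 (H × H)) :
    ‖(2 : ℝ) • (Qop R n u - Qop R n u') - (u - u')‖ ≤ ‖u - u'‖ := by
  rw [← sq_le_sq₀ (norm_nonneg _) (norm_nonneg _), norm_sq_eq_fstL_sndL,
    norm_sq_eq_fstL_sndL (u - u')]
  simp only [map_sub, map_smul, fstL_Qop, sndL_Qop]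
  have h := hR (fstL u) (fstL u')
  set r := R n (fstL u) - R n (fstL u') with hr
  set d := fstL u - fstL u' with hd
  have e : fstL u - R n (fstL u) - (fstL u' - R n (fstL u')) = d - r := by
    rw [hr, hd]; abel
  rw [e] at h
  -- parallelogram identity for `r` and `d - r`, whose sum is `d` and difference `2 r - d`
  have par := parallelogram_law_with_norm ℝ r (d - r)
  have e1 : r + (d - r) = d := by abel
  have e2 : r - (d - r) = (2 : ℝ) • r - d := by rw [two_smul]; abel
  rw [e1, e2] at par
  have e3 : (2 : ℝ) • (sndL u - sndL u') - (sndL u - sndL u') = sndL u - sndL u' := by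
    rw [two_smul]; abel
  rw [e3]
  nlinarith

lemma norm_Qop_sub_le {F : Type*} [NormedAddCommGroup F] [NormedSpace ℝ F]
    (A : WithLp 2 (H × H) →L[ℝ] F) (R : ℕ → H → H) (n : ℕ)
    (hR : ∀ x y : H,
      ‖R n x - R n y‖ ^ 2 + ‖(x - R n x) - (y - R n y)‖ ^ 2 ≤ ‖x - y‖ ^ 2)
    (u u' : WithLp 2 (H × H)) :
    ‖A (Qop R n u) - A (Qop R n u')‖ ≤ (‖A u - A u'‖ + ‖A‖ * ‖u - u'‖) / 2 := by
  have e : A (Qop R n u) - A (Qop R n u') = (1 / 2 : ℝ) •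
      ((A u - A u') + A ((2 : ℝ) • (Qop R n u - Qop R n u') - (u - u'))) := by
    simp only [map_sub, map_smul]
    module
  have h1 : ‖A ((2 : ℝ) • (Qop R n u - Qop R n u') - (u - u'))‖ ≤ ‖A‖ * ‖u - u'‖ :=
    A.le_opNorm_of_le (norm_reflect_Qop_le R n hR u u')
  rw [e, norm_smul, Real.norm_of_nonneg (by norm_num)]
  linarith [norm_add_le (A u - A u') (A ((2 : ℝ) • (Qop R n u - Qop R n u') - (u - u')))]

universe u

/-- The layer-unfolding estimate, for any sequence `θ` dominating the recursion with the operator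
norms of `Uₙ ∘ ⋯ ∘ Uᵢ` in place of `√a_{i,n}`. The target `F` varies in the induction, since the
step uses the estimate for `A ∘ Uₙ₊₁` and for `Uₙ₊₁` itself; hence it lives in the universe of
`H`. -/
lemma net_lipschitz {H : Type u} [NormedAddCommGroup H] [InnerProductSpace ℝ H]
    (U : ℕ → WithLp 2 (H × H) →L[ℝ] WithLp 2 (H × H)) (R : ℕ → H → H) (N : ℕ)
    (hR : ∀ n, 1 ≤ n → n ≤ N → ∀ x y : H,
      ‖R n x - R n y‖ ^ 2 + ‖(x - R n x) - (y - R n y)‖ ^ 2 ≤ ‖x - y‖ ^ 2)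
    (θ : ℕ → ℝ) (hθ0 : θ 0 = 1)
    (hθ : ∀ n, 1 ≤ n → n ≤ N →
      ∑ i ∈ Finset.Icc 1 n, θ (i - 1) * ‖opComp U i n‖ ≤ θ n)
    (n : ℕ) (hn : n ≤ N) {F : Type u} [NormedAddCommGroup F] [NormedSpace ℝ F]
    (A : WithLp 2 (H × H) →L[ℝ] F) (z z' : WithLp 2 (H × H)) :
    ‖A (net U (Qop R) n z) - A (net U (Qop R) n z')‖ ≤
      (∑ i ∈ Finset.Icc 1 (n + 1), θ (i - 1) * ‖A.comp (opComp U i n)‖) / 2 ^ n * ‖z - z'‖ := by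
  induction n generalizing F with
  | zero =>
    simp only [net, id, zero_add, Finset.Icc_self, Finset.sum_singleton, Nat.sub_self, hθ0,
      one_mul, pow_zero, div_one]
    rw [← map_sub]
    exact A.le_opNorm _
  | succ n ih =>
    have h1 := norm_Qop_sub_le A R (n + 1) (hR (n + 1) (by omega) hn)
      (U (n + 1) (net U (Qop R) n z)) (U (n + 1) (net U (Qop R) n z'))
    have h2 := ih (by omega) (A.comp (U (n + 1)))
    have e2 : ∑ i ∈ Finset.Icc 1 (n + 1),
          θ (i - 1) * ‖(A.comp (U (n + 1))).comp (opComp U i n)‖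
        = ∑ i ∈ Finset.Icc 1 (n + 1), θ (i - 1) * ‖A.comp (opComp U i (n + 1))‖ := by
      refine Finset.sum_congr rfl fun i hi => ?_
      rw [opComp_succ U (Finset.mem_Icc.1 hi).2, ContinuousLinearMap.comp_assoc]
    have h3 := ih (by omega) (U (n + 1))
    have e3 : ∑ i ∈ Finset.Icc 1 (n + 1), θ (i - 1) * ‖(U (n + 1)).comp (opComp U i n)‖
        ≤ θ (n + 1) := by
      refine le_trans (le_of_eq ?_) (hθ (n + 1) (by omega) hn)
      refine Finset.sum_congr rfl fun i hi => ?_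
      rw [opComp_succ U (Finset.mem_Icc.1 hi).2]
    have h4 : ‖U (n + 1) (net U (Qop R) n z) - U (n + 1) (net U (Qop R) n z')‖ ≤
        θ (n + 1) / 2 ^ n * ‖z - z'‖ := by
      refine h3.trans ?_
      gcongr
    rw [e2] at h2
    rw [Finset.sum_Icc_succ_top (by omega), Nat.add_sub_cancel,
      opComp_of_lt U (Nat.lt_succ_self (n + 1)),
      show A.comp (1 : WithLp 2 (H × H) →L[ℝ] WithLp 2 (H × H)) = A from rfl]
    have h5 := mul_le_mul_of_nonneg_left h4 (norm_nonneg A)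
    simp only [ContinuousLinearMap.comp_apply] at h2
    refine h1.trans ?_
    refine le_trans (div_le_div_of_nonneg_right (add_le_add h2 h5) (by norm_num)) (le_of_eq ?_)
    rw [pow_succ]
    field_simp

/-! ### Coordinates in the Hilbert basis -/

lemma inner_diag (v : HilbertBasis ℕ ℝ H) (T : H →L[ℝ] H) (c : ℕ → ℝ)
    (hT : ∀ p, T (v p) = c p • v p) (p : ℕ) (x : H) :
    inner ℝ (v p) (T x) = c p * inner ℝ (v p) x := by
  have h1 := ((v.hasSum_repr x).mapL T).mapL (innerSL ℝ (v p))
  refine h1.unique ?_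
  have h2 : ∀ q, innerSL ℝ (v p) (T (v.repr x q • v q)) =
      if q = p then c p * inner ℝ (v p) x else 0 := by
    intro q
    have ho := orthonormal_iff_ite.1 v.orthonormal p q
    rw [map_smul, hT, map_smul, map_smul, innerSL_apply_apply, ho, v.repr_apply_apply]
    by_cases h : q = p
    · subst h; simp [mul_comm]
    · simp [h, Ne.symm h]
  simp_rw [h2]
  exact hasSum_ite_eq p _

lemma hasSum_inner_sq (v : HilbertBasis ℕ ℝ H) (x : H) :
    HasSum (fun p => inner ℝ (v p) x ^ 2) (‖x‖ ^ 2) := by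
  have h := v.hasSum_inner_mul_inner x x
  rw [real_inner_self_eq_norm_sq] at h
  refine h.congr_fun ?_
  intro p
  rw [real_inner_comm, sq]

lemma etaP_succ (eta : ℕ → ℝ) {i n : ℕ} (h : i ≤ n + 1) :
    etaP eta i (n + 1) = etaP eta i n * eta (n + 1) :=
  Finset.prod_Icc_succ_top h _

lemma betaC_succ (beta : ℕ → ℕ → ℝ) {i n : ℕ} (h : i ≤ n + 1) (p : ℕ) :
    betaC beta i (n + 1) p = betaC beta i n p * beta (n + 1) p :=
  Finset.prod_Icc_succ_top h _

lemma betaT_self (beta : ℕ → ℕ → ℝ) (lam eta : ℕ → ℝ) {i : ℕ} (h : 1 ≤ i) (p : ℕ) :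
    betaT beta lam eta i i p = lam i := by
  have : Finset.Icc i (i - 1) = ∅ := Finset.Icc_eq_empty (by omega)
  simp [betaT, etaP, this]

lemma betaT_succ (beta : ℕ → ℕ → ℝ) (lam eta : ℕ → ℝ) {i n : ℕ} (hi : 1 ≤ i) (h : i ≤ n)
    (p : ℕ) :
    betaT beta lam eta i (n + 1) p =
      beta (n + 1) p * betaT beta lam eta i n p + lam (n + 1) * etaP eta i n := by
  obtain ⟨k, rfl⟩ : ∃ k, n = k + 1 := ⟨n - 1, by omega⟩
  unfold betaT
  simp only [Nat.add_sub_cancel]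
  rw [Finset.sum_Icc_succ_top h, Finset.Icc_self, Finset.prod_singleton, Nat.add_sub_cancel,
    mul_add, Finset.mul_sum]
  congr 1
  rw [← mul_assoc]
  congr 1
  refine Finset.sum_congr rfl fun j hj => ?_
  rw [Finset.prod_Icc_succ_top (by have := (Finset.mem_Icc.1 hj).2; omega)]
  ring

lemma sndL_opComp (W : ℕ → H →L[ℝ] H) (lam eta : ℕ → ℝ) {i n : ℕ} (hi : 1 ≤ i) (hin : i ≤ n)
    (z : WithLp 2 (H × H)) :
    sndL (opComp (Uop W lam eta) i n z) = etaP eta i n • sndL z := by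
  induction n, hin using Nat.le_induction with
  | base =>
    obtain ⟨k, rfl⟩ : ∃ k, i = k + 1 := ⟨i - 1, by omega⟩
    rw [opComp_succ _ le_rfl, opComp_of_lt _ (Nat.lt_succ_self k)]
    simp [etaP]
  | succ n hin ih =>
    rw [opComp_succ _ (by omega), ContinuousLinearMap.comp_apply, sndL_Uop, ih,
      etaP_succ _ (by omega), smul_smul, mul_comm]

lemma coord_opComp (v : HilbertBasis ℕ ℝ H) (W : ℕ → H →L[ℝ] H) (beta : ℕ → ℕ → ℝ)
    (lam eta : ℕ → ℝ) (m : ℕ)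
    (hW : ∀ n, 1 ≤ n → n ≤ m → ∀ p : ℕ, W n (v p) = beta n p • v p)
    {i n : ℕ} (hi : 1 ≤ i) (hin : i ≤ n) (hn : n ≤ m) (p : ℕ) (z : WithLp 2 (H × H)) :
    inner ℝ (v p) (fstL (opComp (Uop W lam eta) i n z)) =
      betaC beta i n p * inner ℝ (v p) (fstL z)
        + betaT beta lam eta i n p * inner ℝ (v p) (sndL z) := by
  induction n, hin using Nat.le_induction with
  | base =>
    rw [betaT_self _ _ _ hi]
    obtain ⟨k, rfl⟩ : ∃ k, i = k + 1 := ⟨i - 1, by omega⟩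
    rw [opComp_succ _ le_rfl, opComp_of_lt _ (Nat.lt_succ_self k)]
    simp [betaC, inner_add_right, inner_smul_right,
      inner_diag v (W (k + 1)) (beta (k + 1)) (hW _ hi hn)]
  | succ n hin ih =>
    rw [opComp_succ _ (by omega), ContinuousLinearMap.comp_apply, fstL_Uop, inner_add_right,
      inner_diag v (W (n + 1)) (beta (n + 1)) (hW _ (by omega) hn), ih (by omega),
      sndL_opComp W lam eta hi hin, inner_smul_right, inner_smul_right,
      betaC_succ _ (by omega), betaT_succ _ _ _ hi hin]
    ring

lemma norm_fstL_le (z : WithLp 2 (H × H)) : ‖fstL z‖ ≤ ‖z‖ := by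
  rw [← sq_le_sq₀ (norm_nonneg _) (norm_nonneg _), norm_sq_eq_fstL_sndL z]
  nlinarith [sq_nonneg ‖sndL z‖]

/-- The coefficients are bounded in `p`: they are coordinates of the images of the unit vectors
`(v p, 0)` and `(0, v p)`. -/
lemma coeff_sq_le (v : HilbertBasis ℕ ℝ H) (W : ℕ → H →L[ℝ] H) (beta : ℕ → ℕ → ℝ)
    (lam eta : ℕ → ℝ) (m : ℕ)
    (hW : ∀ n, 1 ≤ n → n ≤ m → ∀ p : ℕ, W n (v p) = beta n p • v p)
    {i n : ℕ} (hi : 1 ≤ i) (hin : i ≤ n) (hn : n ≤ m) (p : ℕ) :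
    betaC beta i n p ^ 2 ≤ ‖opComp (Uop W lam eta) i n‖ ^ 2 ∧
      betaT beta lam eta i n p ^ 2 ≤ ‖opComp (Uop W lam eta) i n‖ ^ 2 := by
  have hv : ‖v p‖ = 1 := v.orthonormal.1 p
  have gen : ∀ z : WithLp 2 (H × H), ‖z‖ ^ 2 = 1 →
      inner ℝ (v p) (fstL (opComp (Uop W lam eta) i n z)) ^ 2
        ≤ ‖opComp (Uop W lam eta) i n‖ ^ 2 := by
    intro z hz
    have hz1 : ‖z‖ = 1 := by
      have := norm_nonneg z
      nlinarith
    rw [sq_le_sq, abs_of_nonneg (norm_nonneg (opComp _ _ _))]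
    calc _ ≤ ‖v p‖ * ‖fstL (opComp (Uop W lam eta) i n z)‖ := abs_real_inner_le_norm _ _
      _ ≤ ‖opComp (Uop W lam eta) i n z‖ := by rw [hv, one_mul]; exact norm_fstL_le _
      _ ≤ ‖opComp (Uop W lam eta) i n‖ * ‖z‖ := ContinuousLinearMap.le_opNorm _ _
      _ = _ := by rw [hz1, mul_one]
  constructor
  · have := gen (mkP (v p) 0) (by rw [norm_sq_eq_fstL_sndL]; simp [hv])
    rw [coord_opComp v W beta lam eta m hW hi hin hn] at this
    simpa [hv] using this
  · have := gen (mkP 0 (v p)) (by rw [norm_sq_eq_fstL_sndL]; simp [hv])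
    rw [coord_opComp v W beta lam eta m hW hi hin hn] at this
    simpa [hv] using this

/-! ### Operator norm bounds -/

lemma quad_nonneg {P Q r : ℝ} (hP : 0 ≤ P) (hQ : 0 ≤ Q) (h : P * Q = r ^ 2) (x b : ℝ) :
    0 ≤ P * x ^ 2 - 2 * r * (x * b) + Q * b ^ 2 := by
  rcases hP.eq_or_lt with h0 | h0
  · have : r = 0 := by
      rw [← h0, zero_mul] at h
      exact pow_eq_zero_iff (two_ne_zero) |>.1 h.symm
    subst this
    rw [← h0]
    nlinarith [mul_nonneg hQ (sq_nonneg b)]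
  · refine nonneg_of_mul_nonneg_right ?_ h0
    have : P * (P * x ^ 2 - 2 * r * (x * b) + Q * b ^ 2) = (P * x - r * b) ^ 2 := by
      linear_combination b ^ 2 * h
    rw [this]
    positivity

/-- The larger eigenvalue of the Gram matrix of `!![β, t; 0, e]` bounds its squared norm. -/
lemma two_by_two_bound (β t e x b : ℝ) :
    (β * x + t * b) ^ 2 + (e * b) ^ 2 ≤
      (1 / 2) * (β ^ 2 + t ^ 2 + e ^ 2
        + Real.sqrt ((β ^ 2 + t ^ 2 + e ^ 2) ^ 2 - 4 * β ^ 2 * e ^ 2)) * (x ^ 2 + b ^ 2) := by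
  set D := (β ^ 2 + t ^ 2 + e ^ 2) ^ 2 - 4 * β ^ 2 * e ^ 2 with hD
  have hD1 : (β ^ 2 - (t ^ 2 + e ^ 2)) ^ 2 ≤ D := by
    nlinarith [mul_nonneg (sq_nonneg β) (sq_nonneg t)]
  have hD0 : 0 ≤ D := (sq_nonneg _).trans hD1
  have hs : |β ^ 2 - (t ^ 2 + e ^ 2)| ≤ Real.sqrt D := Real.abs_le_sqrt hD1
  have hsq : Real.sqrt D ^ 2 = D := Real.sq_sqrt hD0
  set s := Real.sqrt D
  obtain ⟨h1, h2⟩ := abs_le.1 hs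
  have := quad_nonneg (P := (1 / 2) * (β ^ 2 + t ^ 2 + e ^ 2 + s) - β ^ 2)
    (Q := (1 / 2) * (β ^ 2 + t ^ 2 + e ^ 2 + s) - (t ^ 2 + e ^ 2)) (r := β * t)
    (by linarith) (by linarith) (by rw [hD] at hsq; linear_combination (1 / 4) * hsq) x b
  linarith

lemma opNorm_opComp_le (v : HilbertBasis ℕ ℝ H) (W : ℕ → H →L[ℝ] H) (beta : ℕ → ℕ → ℝ)
    (lam eta : ℕ → ℝ) (m : ℕ)
    (hW : ∀ n, 1 ≤ n → n ≤ m → ∀ p : ℕ, W n (v p) = beta n p • v p)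
    {i n : ℕ} (hi : 1 ≤ i) (hin : i ≤ n) (hn : n ≤ m) :
    ‖opComp (Uop W lam eta) i n‖ ≤ Real.sqrt (aC beta lam eta i n) := by
  set T := opComp (Uop W lam eta) i n with hT
  let f : ℕ → ℝ := fun p => betaC beta i n p ^ 2 + betaT beta lam eta i n p ^ 2
    + etaP eta i n ^ 2
    + Real.sqrt ((betaC beta i n p ^ 2 + betaT beta lam eta i n p ^ 2 + etaP eta i n ^ 2) ^ 2
          - 4 * betaC beta i n p ^ 2 * etaP eta i n ^ 2)
  have hbdd : BddAbove (Set.range f) := by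
    refine ⟨2 * (‖T‖ ^ 2 + ‖T‖ ^ 2 + etaP eta i n ^ 2), ?_⟩
    rintro _ ⟨p, rfl⟩
    obtain ⟨h1, h2⟩ := coeff_sq_le v W beta lam eta m hW hi hin hn p
    have h3 : Real.sqrt ((betaC beta i n p ^ 2 + betaT beta lam eta i n p ^ 2
        + etaP eta i n ^ 2) ^ 2 - 4 * betaC beta i n p ^ 2 * etaP eta i n ^ 2) ≤
        betaC beta i n p ^ 2 + betaT beta lam eta i n p ^ 2 + etaP eta i n ^ 2 :=
      Real.sqrt_le_iff.2 ⟨by positivity, by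
        nlinarith [mul_nonneg (sq_nonneg (betaC beta i n p)) (sq_nonneg (etaP eta i n))]⟩
    simp only [f]
    linarith
  have hle : ∀ p, (1 / 2) * f p ≤ aC beta lam eta i n := fun p =>
    mul_le_mul_of_nonneg_left (le_ciSup hbdd p) (by norm_num)
  refine ContinuousLinearMap.opNorm_le_bound _ (Real.sqrt_nonneg _) fun z => ?_
  have hf0 : 0 ≤ aC beta lam eta i n :=
    le_trans (by simp only [f]; positivity) (hle 0)
  rw [← sq_le_sq₀ (norm_nonneg _) (by positivity), mul_pow, Real.sq_sqrt hf0,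
    norm_sq_eq_fstL_sndL, norm_sq_eq_fstL_sndL z]
  refine hasSum_le (fun p => ?_)
    ((hasSum_inner_sq v (fstL (T z))).add (hasSum_inner_sq v (sndL (T z))))
    (((hasSum_inner_sq v (fstL z)).add (hasSum_inner_sq v (sndL z))).mul_left _)
  rw [hT, coord_opComp v W beta lam eta m hW hi hin hn, sndL_opComp W lam eta hi hin,
    inner_smul_right]
  exact (two_by_two_bound _ _ _ _ _).trans
    (mul_le_mul_of_nonneg_right (hle p) (by positivity))

lemma opNorm_Ubar_comp_le (v : HilbertBasis ℕ ℝ H) (W : ℕ → H →L[ℝ] H) (beta : ℕ → ℕ → ℝ)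
    (lam eta : ℕ → ℝ) (k : ℕ)
    (hW : ∀ n, 1 ≤ n → n ≤ k + 1 → ∀ p : ℕ, W n (v p) = beta n p • v p)
    {i : ℕ} (hi : 1 ≤ i) (hin : i ≤ k + 1) :
    ‖(Ubar W lam (k + 1)).comp (opComp (Uop W lam eta) i k)‖
      ≤ Real.sqrt (aBar beta lam eta i (k + 1)) := by
  have hbdd : BddAbove (Set.range fun p =>
      betaC beta i (k + 1) p ^ 2 + betaT beta lam eta i (k + 1) p ^ 2) := by
    refine ⟨‖opComp (Uop W lam eta) i (k + 1)‖ ^ 2 + ‖opComp (Uop W lam eta) i (k + 1)‖ ^ 2, ?_⟩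
    rintro _ ⟨p, rfl⟩
    obtain ⟨h1, h2⟩ := coeff_sq_le v W beta lam eta (k + 1) hW hi hin le_rfl p
    exact add_le_add h1 h2
  have hle : ∀ p, betaC beta i (k + 1) p ^ 2 + betaT beta lam eta i (k + 1) p ^ 2
      ≤ aBar beta lam eta i (k + 1) := fun p => le_ciSup hbdd p
  refine ContinuousLinearMap.opNorm_le_bound _ (Real.sqrt_nonneg _) fun z => ?_
  have hf0 : 0 ≤ aBar beta lam eta i (k + 1) := le_trans (by positivity) (hle 0)
  rw [← sq_le_sq₀ (norm_nonneg _) (by positivity), mul_pow, Real.sq_sqrt hf0,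
    norm_sq_eq_fstL_sndL z, ContinuousLinearMap.comp_apply, Ubar_eq_fstL_Uop W lam eta,
    ← ContinuousLinearMap.comp_apply (Uop W lam eta (k + 1)), ← opComp_succ _ hin]
  refine hasSum_le (fun p => ?_) (hasSum_inner_sq v _)
    (((hasSum_inner_sq v (fstL z)).add (hasSum_inner_sq v (sndL z))).mul_left _)
  rw [coord_opComp v W beta lam eta (k + 1) hW hi hin le_rfl]
  refine le_trans ?_ (mul_le_mul_of_nonneg_right (hle p) (by positivity))
  -- Cauchy–Schwarz in `ℝ²`
  nlinarith [sq_nonneg (betaC beta i (k + 1) p * inner ℝ (v p) (sndL z)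
    - betaT beta lam eta i (k + 1) p * inner ℝ (v p) (fstL z))]

theorem statement11 (m : ℕ) (hm : 1 ≤ m) [CompleteSpace H]
    (v : HilbertBasis ℕ ℝ H)
    (W : ℕ → H →L[ℝ] H) (beta : ℕ → ℕ → ℝ) (lam eta : ℕ → ℝ)
    (hW : ∀ n, 1 ≤ n → n ≤ m → ∀ p : ℕ, W n (v p) = beta n p • v p)
    (hlam : ∀ n, 1 ≤ n → n ≤ m → 0 < lam n)
    (heta : ∀ n, 1 ≤ n → n ≤ m → 0 < eta n)
    (R : ℕ → H → H)
    (hR : ∀ n, 1 ≤ n → n ≤ m → ∀ x y : H,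
      ‖R n x - R n y‖ ^ 2 + ‖(x - R n x) - (y - R n y)‖ ^ 2 ≤ ‖x - y‖ ^ 2)
    (θ : ℕ → ℝ) (hθ0 : θ 0 = 1)
    (hθ : ∀ n, 1 ≤ n → n ≤ m - 1 →
      θ n = ∑ i ∈ Finset.Icc 1 n, θ (i - 1) * Real.sqrt (aC beta lam eta i n))
    (θbar : ℝ)
    (hθbar : θbar = ∑ i ∈ Finset.Icc 1 m, θ (i - 1) * Real.sqrt (aBar beta lam eta i m)) :
    ∀ z z' : WithLp 2 (H × H),
      ‖R m (Ubar W lam m (net (Uop W lam eta) (Qop R) (m - 1) z))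
          - R m (Ubar W lam m (net (Uop W lam eta) (Qop R) (m - 1) z'))‖
        ≤ θbar / 2 ^ (m - 1) * ‖z - z'‖ := by
  intro z z'
  obtain ⟨k, rfl⟩ : ∃ k, m = k + 1 := ⟨m - 1, by omega⟩
  simp only [Nat.add_sub_cancel] at hθ ⊢
  have hθnn : ∀ n, n ≤ k → 0 ≤ θ n := by
    intro n
    induction n using Nat.strong_induction_on with
    | _ n ih =>
      intro hn
      rcases Nat.eq_zero_or_pos n with rfl | h0
      · rw [hθ0]; exact zero_le_one
      · rw [hθ n h0 hn]
        refine Finset.sum_nonneg fun i hi => ?_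
        have := Finset.mem_Icc.1 hi
        exact mul_nonneg (ih (i - 1) (by omega) (by omega)) (Real.sqrt_nonneg _)
  have hlip := net_lipschitz (Uop W lam eta) R k (fun n h1 h2 => hR n h1 (by omega)) θ hθ0
    (fun n h1 h2 => by
      rw [hθ n h1 h2]
      refine Finset.sum_le_sum fun i hi => ?_
      have := Finset.mem_Icc.1 hi
      exact mul_le_mul_of_nonneg_left
        (opNorm_opComp_le v W beta lam eta (k + 1) hW this.1 this.2 (by omega))
        (hθnn _ (by omega)))
    k le_rfl (Ubar W lam (k + 1)) z z'
  have hRm : ∀ x y : H, ‖R (k + 1) x - R (k + 1) y‖ ≤ ‖x - y‖ := by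
    intro x y
    rw [← sq_le_sq₀ (norm_nonneg _) (norm_nonneg _)]
    exact le_trans (le_add_of_nonneg_right (sq_nonneg _)) (hR (k + 1) hm le_rfl x y)
  refine (hRm _ _).trans (hlip.trans ?_)
  rw [hθbar]
  gcongr with i hi
  · have := Finset.mem_Icc.1 hi
    exact hθnn _ (by omega)
  · have := Finset.mem_Icc.1 hi
    exact opNorm_Ubar_comp_le v W beta lam eta k hW this.1 this.2
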